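/- Every 2-coloring of the Boolean lattice Q_5 in which both the empty set and the full ground set [5] are colored blue contains a red copy of Q_2 or a blue copy of Q_3. -/

import Mathlib

/-- A red copy of the Boolean lattice `Q m` inside the 2-colored Boolean lattice `Q N`,
where `c S = true` means `S` is red and `c S = false` means `S` is blue. -/
def HasRedCopy (m N : ℕ) (c : Finset (Fin N) → Bool) : Prop :=
  ∃ f : Finset (Fin m) → Finset (Fin N),
    Function.Injective f ∧
    (∀ S T : Finset (Fin m), S ⊆ T ↔ f S ⊆ f T) ∧
    (∀ S : Finset (Fin m), c (f S) = true)

/-- A blue copy of the Boolean lattice `Q m` inside the 2-colored Boolean lattice `Q N`. -/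
def HasBlueCopy (m N : ℕ) (c : Finset (Fin N) → Bool) : Prop :=
  ∃ f : Finset (Fin m) → Finset (Fin N),
    Function.Injective f ∧
    (∀ S T : Finset (Fin m), S ⊆ T ↔ f S ⊆ f T) ∧
    (∀ S : Finset (Fin m), c (f S) = false)

/-!
The engine is the red chain lemma of Axenovich and Walzer: if there is no blue `Q_m` in `Q_{m+2}`,
then for all `a ≠ b` there are red sets `R ⊆ S ⊆ T` such that `S` gains `a` over `R` and `T` gains
`b` over `S`.

In a counterexample in `Q_5`, suppose that `{a}` is red. The chains for the pairs `(a, b)` together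
with the absence of a red `Q_2` make every `4`-set through `a` red, and each of them contains a red
triple through `a`. By complementation all singletons and all `4`-sets are red, so the red triples
inside a given `4`-set cover it. Two of them meet in some `e`, and they form a red `Q_2` together
with `{e}` and the `4`-set. Hence no singleton is red, dually no `4`-set is red, and a red chain
`R ⊂ S ⊂ T` does not fit between the sizes `2` and `3`.
-/

open Finset in
theorem exists_eq_compl_singleton {α : Type*} [Fintype α] [DecidableEq α] {S : Finset α}
    (hS : #S + 1 = Fintype.card α) : ∃ y, S = {y}ᶜ := by
  obtain ⟨y, hy⟩ : ∃ y, Sᶜ = {y} := card_eq_one.1 (by rw [card_compl]; omega)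
  exact ⟨y, by rw [← hy, compl_compl]⟩

section Copies

open Finset

variable {m N : ℕ} {c : Finset (Fin N) → Bool}

theorem HasRedCopy.of_compl (h : HasRedCopy m N fun S => c Sᶜ) : HasRedCopy m N c := by
  obtain ⟨f, hinj, hsub, hred⟩ := h
  refine ⟨fun S => (f Sᶜ)ᶜ, fun S T hST => compl_injective (hinj (compl_injective hST)),
    fun S T => ?_, fun S => hred Sᶜ⟩
  rw [compl_subset_compl, ← hsub, compl_subset_compl]

theorem HasBlueCopy.of_compl (h : HasBlueCopy m N fun S => c Sᶜ) : HasBlueCopy m N c := by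
  obtain ⟨f, hinj, hsub, hblue⟩ := h
  refine ⟨fun S => (f Sᶜ)ᶜ, fun S T hST => compl_injective (hinj (compl_injective hST)),
    fun S T => ?_, fun S => hblue Sᶜ⟩
  rw [compl_subset_compl, ← hsub, compl_subset_compl]

theorem hasRedCopy_two_of_diamond {A B C D : Finset (Fin N)} (hA : c A = true) (hB : c B = true)
    (hC : c C = true) (hD : c D = true) (hAB : A ⊆ B) (hAC : A ⊆ C) (hBD : B ⊆ D) (hCD : C ⊆ D)
    (hBC : ¬B ⊆ C) (hCB : ¬C ⊆ B) : HasRedCopy 2 N c := by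
  let f : Finset (Fin 2) → Finset (Fin N) := fun S =>
    if 0 ∈ S then if 1 ∈ S then D else B else if 1 ∈ S then C else A
  have hBA : ¬B ⊆ A := fun h => hBC (h.trans hAC)
  have hCA : ¬C ⊆ A := fun h => hCB (h.trans hAB)
  have hDB : ¬D ⊆ B := fun h => hCB (hCD.trans h)
  have hDC : ¬D ⊆ C := fun h => hBC (hBD.trans h)
  have hDA : ¬D ⊆ A := fun h => hDB (h.trans hAB)
  have hf (S T : Finset (Fin 2)) : S ⊆ T ↔ f S ⊆ f T := by
    rw [subset_iff, Fin.forall_fin_two]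
    by_cases h₀ : 0 ∈ S <;> by_cases h₁ : 1 ∈ S <;>
      by_cases h₀' : 0 ∈ T <;> by_cases h₁' : 1 ∈ T <;>
      simp [f, h₀, h₁, h₀', h₁', hAB, hAC, hBD, hCD, hBC, hCB, hBA, hCA, hDB, hDC, hDA,
        hAB.trans hBD]
  refine ⟨f, (OrderEmbedding.ofMapLEIff f fun S T => (hf S T).symm).injective, hf, fun S => ?_⟩
  dsimp only [f]
  split_ifs <;> assumption

theorem eq_of_card_eq_of_not_hasRedCopy_two (h : ¬HasRedCopy 2 N c) {A B C D : Finset (Fin N)}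
    (hA : c A = true) (hB : c B = true) (hC : c C = true) (hD : c D = true) (hAB : A ⊆ B)
    (hAC : A ⊆ C) (hBD : B ⊆ D) (hCD : C ⊆ D) (hcard : #B = #C) : B = C := by
  by_contra hne
  exact h <| hasRedCopy_two_of_diamond hA hB hC hD hAB hAC hBD hCD
    (fun hBC => hne (eq_of_subset_of_card_le hBC hcard.ge))
    (fun hCB => hne (eq_of_subset_of_card_le hCB hcard.le).symm)

end Copies

section RedChain

open Finset

variable {α : Type*} [DecidableEq α] {c : Finset α → Bool} {Y : ℕ → Finset α} {i j : ℕ}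
  {T U : Finset α}

/-- A red `Y`-chain of length `i` over `T`: sets `T₀ ⊆ T₁ ⊆ ⋯ ⊆ Tᵢ₋₁ ⊆ T` such that every
`Tⱼ ∪ Y j` is red. The recursion peels off the largest set of the chain. -/
def HasRedChain (c : Finset α → Bool) (Y : ℕ → Finset α) : ℕ → Finset α → Prop
  | 0, _ => True
  | i + 1, T => ∃ S ⊆ T, c (S ∪ Y i) = true ∧ HasRedChain c Y i S

theorem HasRedChain.mono (h : HasRedChain c Y i T) (hTU : T ⊆ U) : HasRedChain c Y i U := by
  cases i with
  | zero => trivial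
  | succ i =>
    obtain ⟨S, hST, hS⟩ := h
    exact ⟨S, hST.trans hTU, hS⟩

theorem HasRedChain.anti (h : HasRedChain c Y j T) (hij : i ≤ j) : HasRedChain c Y i T := by
  induction hij with
  | refl => exact h
  | step _ ih =>
    obtain ⟨S, hST, -, hS⟩ := h
    exact ih (hS.mono hST)

theorem exists_maximal_hasRedChain (h : ¬HasRedChain c Y j T) :
    ∃ i, HasRedChain c Y i T ∧ ¬HasRedChain c Y (i + 1) T := by
  by_contra! hstep
  exact h (Nat.rec trivial hstep j)

/-- The length of the longest red chain over `T` tells how far `T` has to be lifted along `Y` to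
become blue. -/
theorem hasBlueCopy_or_hasRedChain {m N : ℕ} (c : Finset (Fin N) → Bool) {X : Finset (Fin N)}
    (hX : #X = m) {Y : ℕ → Finset (Fin N)} (hY : Monotone Y) (hXY : ∀ i, Disjoint X (Y i)) (k : ℕ) :
    HasBlueCopy m N c ∨ HasRedChain c Y k X := by
  refine or_iff_not_imp_right.2 fun hchain => ?_
  let e : Finset (Fin m) ↪o Finset (Fin N) := mapEmbedding (X.orderEmbOfFin hX).toEmbedding
  have heX (S) : e S ⊆ X := by
    intro x hx
    obtain ⟨i, -, rfl⟩ := mem_map.1 hx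
    exact X.orderEmbOfFin_mem hX i
  choose height hheight hmax using fun S =>
    exists_maximal_hasRedChain fun h : HasRedChain c Y k (e S) => hchain (h.mono (heX S))
  have height_mono : Monotone height := fun S T hST => by
    by_contra! hlt
    exact hmax T (((hheight S).mono (e.monotone hST)).anti hlt)
  let f : Finset (Fin m) → Finset (Fin N) := fun S => e S ∪ Y (height S)
  have hf (S T) : S ⊆ T ↔ f S ⊆ f T := by
    refine ⟨fun hST => union_subset_union (e.monotone hST) (hY (height_mono hST)), fun hST => ?_⟩
    have hdisj : Disjoint (e S) (Y (height T)) := (hXY _).mono_left (heX S)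
    exact e.le_iff_le.1 (hdisj.left_le_of_le_sup_right (subset_union_left.trans hST))
  refine ⟨f, (OrderEmbedding.ofMapLEIff f fun S T => (hf S T).symm).injective, hf, fun S => ?_⟩
  by_contra hred
  exact hmax S ⟨e S, Subset.rfl, Bool.eq_true_of_not_eq_false hred, hheight S⟩

theorem exists_red_chain_of_not_hasBlueCopy {m : ℕ} {c : Finset (Fin (m + 2)) → Bool}
    (h : ¬HasBlueCopy m (m + 2) c) {a b : Fin (m + 2)} (hab : a ≠ b) :
    ∃ R S T, c R = true ∧ c S = true ∧ c T = true ∧ R ⊆ S ∧ S ⊆ T ∧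
      a ∉ R ∧ a ∈ S ∧ b ∉ S ∧ b ∈ T := by
  let X : Finset (Fin (m + 2)) := {a, b}ᶜ
  let Y : ℕ → Finset (Fin (m + 2)) := fun i => ([a, b].take i).toFinset
  have hX : #X = m := by rw [card_compl, card_pair hab, Fintype.card_fin, Nat.add_sub_cancel]
  have hY : Monotone Y := fun i j hij x => by
    simpa [Y] using fun hx => List.take_subset_take_left _ hij hx
  have hXY (i) : Disjoint X (Y i) := by
    refine disjoint_compl_left.mono_right (b := Y i) fun x hx => ?_
    simpa using List.mem_of_mem_take (List.mem_toFinset.1 hx)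
  obtain ⟨T, hTX, hT, S, hST, hS, R, hRS, hR, -⟩ :=
    (hasBlueCopy_or_hasRedChain c hX hY hXY 3).resolve_left h
  have haX : a ∉ X := by simp [X]
  have hbX : b ∉ X := by simp [X]
  refine ⟨R ∪ Y 0, S ∪ Y 1, T ∪ Y 2, hR, hS, hT, union_subset_union hRS (hY zero_le_one),
    union_subset_union hST (hY one_le_two), ?_, ?_, ?_, ?_⟩
  · simpa [Y] using fun ha => haX (hTX (hST (hRS ha)))
  · simp [Y]
  · simpa [Y, hab.symm] using fun hb => hbX (hTX (hST hb))
  · simp [Y]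

end RedChain

/-- A 2-coloring of `Q_5` violating the theorem: the bottom and the top are blue, and there is
neither a red `Q_2` nor a blue `Q_3`. -/
structure IsCounterexample (c : Finset (Fin 5) → Bool) : Prop where
  blue_empty : c ∅ = false
  blue_univ : c Finset.univ = false
  not_hasRedCopy : ¬HasRedCopy 2 5 c
  not_hasBlueCopy : ¬HasBlueCopy 3 5 c

namespace IsCounterexample

open Finset

variable {c : Finset (Fin 5) → Bool} {a b y : Fin 5} {S : Finset (Fin 5)}

theorem compl (hc : IsCounterexample c) : IsCounterexample fun S => c Sᶜ where
  blue_empty := by simpa using hc.blue_univ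
  blue_univ := by simpa using hc.blue_empty
  not_hasRedCopy h := hc.not_hasRedCopy h.of_compl
  not_hasBlueCopy h := hc.not_hasBlueCopy h.of_compl

theorem card_pos_of_red (hc : IsCounterexample c) (hS : c S = true) : 0 < #S := by
  rw [card_pos, nonempty_iff_ne_empty]
  rintro rfl
  simp [hc.blue_empty] at hS

theorem card_lt_five_of_red (hc : IsCounterexample c) (hS : c S = true) : #S < 5 := by
  refine (card_lt_iff_ne_univ S).2 ?_
  rintro rfl
  simp [hc.blue_univ] at hS

theorem exists_red_chain (hc : IsCounterexample c) (hab : a ≠ b) :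
    ∃ R S T, c R = true ∧ c S = true ∧ c T = true ∧ R ⊂ S ∧ S ⊂ T ∧
      a ∈ S ∧ b ∉ S ∧ b ∈ T := by
  obtain ⟨R, S, T, hR, hS, hT, hRS, hST, haR, haS, hbS, hbT⟩ :=
    exists_red_chain_of_not_hasBlueCopy hc.not_hasBlueCopy hab
  exact ⟨R, S, T, hR, hS, hT, (ssubset_iff_of_subset hRS).2 ⟨a, haS, haR⟩,
    (ssubset_iff_of_subset hST).2 ⟨b, hbT, hbS⟩, haS, hbS, hbT⟩

theorem card_ne_two_of_red (hc : IsCounterexample c) (ha : c {a} = true) (hS : c S = true)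
    (haS : a ∈ S) : #S ≠ 2 := by
  intro hcard
  obtain ⟨p, hp⟩ : ∃ p, S.erase a = {p} := card_eq_one.1 (by rw [card_erase_of_mem haS, hcard])
  obtain rfl : S = {a, p} := by rw [← hp, insert_erase haS]
  have hap : a ≠ p := by
    rintro rfl
    simp at hcard
  obtain ⟨R, S, T, hR, hS', hT, hRS, hST, haS, hpS, hpT⟩ := hc.exists_red_chain hap
  have hS_card : 1 < #S := lt_of_le_of_lt (hc.card_pos_of_red hR) (card_lt_card hRS)
  have hpair : {a, p} ⊆ T := by simp [insert_subset_iff, hST.subset haS, hpT]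
  refine hc.not_hasRedCopy <| hasRedCopy_two_of_diamond ha hS hS' hT (by simp) (by simpa) hpair
    hST.subset (by simp [insert_subset_iff, hpS]) fun hSp => ?_
  have hSa : S ⊆ {a} := by
    rw [← erase_eq_of_notMem hpS, ← subset_insert_iff, pair_comm]
    exact hSp
  exact hS_card.not_ge (card_le_card hSa)

theorem exists_red_compl_singleton_and_red_triple (hc : IsCounterexample c) (ha : c {a} = true)
    (hba : b ≠ a) : ∃ y, y ≠ a ∧ y ≠ b ∧ c {y}ᶜ = true ∧
      ∃ S, c S = true ∧ #S = 3 ∧ a ∈ S ∧ b ∉ S ∧ y ∉ S := by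
  obtain ⟨R, S, T, hR, hS, hT, hRS, hST, haS, hbS, hbT⟩ := hc.exists_red_chain hba.symm
  have hR_pos := hc.card_pos_of_red hR
  have hRS_card := card_lt_card hRS
  have hST_card := card_lt_card hST
  have hT_lt := hc.card_lt_five_of_red hT
  have hS_ne := hc.card_ne_two_of_red ha hS haS
  obtain ⟨y, rfl⟩ := exists_eq_compl_singleton (S := T) (by rw [Fintype.card_fin]; omega)
  have hyS : y ∉ S := fun h => by simpa using hST.subset h
  exact ⟨y, fun h => hyS (h ▸ haS), fun h => by simp [h] at hbT, hT, S, hS, by omega, haS, hbS, hyS⟩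

/-- Distinct `b` give distinct `y` in `exists_red_compl_singleton_and_red_triple`, so every `y ≠ a`
occurs. -/
theorem red_compl_singleton_and_exists_red_triple (hc : IsCounterexample c) (ha : c {a} = true)
    (hya : y ≠ a) : c {y}ᶜ = true ∧ ∃ S, c S = true ∧ #S = 3 ∧ a ∈ S ∧ y ∉ S := by
  choose z hza hzb hz S hS hcard haS hbS hzS using fun b : {b // b ≠ a} =>
    hc.exists_red_compl_singleton_and_red_triple ha b.2
  have z_injective : Function.Injective fun b => (⟨z b, hza b⟩ : {b // b ≠ a}) := by
    intro b b' h
    have hzz : z b = z b' := congrArg Subtype.val h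
    have hSS : S b = S b' :=
      eq_of_card_eq_of_not_hasRedCopy_two hc.not_hasRedCopy ha (hS b) (hS b') (hz b)
        (by simp [haS]) (by simp [haS]) (by simp [hzS]) (by simp [hzz, hzS])
        (by rw [hcard, hcard])
    by_contra hne
    have hdisj : Disjoint (S b) {b.1, b'.1, z b} := by
      simpa using ⟨hbS b, hSS ▸ hbS b', hzS b⟩
    have hcard_avoided : #{b.1, b'.1, z b} = 3 :=
      card_eq_three.2 ⟨_, _, _, Subtype.coe_ne_coe.2 hne, (hzb b).symm, hzz ▸ (hzb b').symm, rfl⟩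
    have hcard_le := card_le_univ (S b ∪ {b.1, b'.1, z b})
    rw [card_union_of_disjoint hdisj, hcard, hcard_avoided, Fintype.card_fin] at hcard_le
    omega
  obtain ⟨b, hb⟩ := Finite.injective_iff_surjective.1 z_injective ⟨y, hya⟩
  obtain rfl : z b = y := congrArg Subtype.val hb
  exact ⟨hz b, S b, hS b, hcard b, haS b, hzS b⟩

theorem red_singleton_of_red_singleton (hc : IsCounterexample c) (ha : c {a} = true) (b : Fin 5) :
    c {b} = true := by
  obtain ⟨y, hya, hyb⟩ : ∃ y, y ≠ a ∧ y ≠ b := by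
    simpa using exists_mem_notMem_of_card_lt_card (s := {a, b}) (t := univ) (by simp; grind)
  have hy : c {y}ᶜ = true := (hc.red_compl_singleton_and_exists_red_triple ha hya).1
  simpa using (hc.compl.red_compl_singleton_and_exists_red_triple hy hyb.symm).1

theorem not_red_singleton (hc : IsCounterexample c) (a : Fin 5) : ¬c {a} = true := by
  intro ha
  have red_singleton (b) : c {b} = true := hc.red_singleton_of_red_singleton ha b
  have red_compl (b) (hb : b ≠ a) :=
    hc.red_compl_singleton_and_exists_red_triple (red_singleton b) hb.symm
  obtain ⟨b, hb⟩ := exists_ne a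
  obtain ⟨hD, S, hS, hS_card, -, haS⟩ := red_compl b hb
  obtain ⟨d, hd⟩ : ∃ d, d ∉ insert a S := by
    by_contra! h
    have := card_le_card (fun x _ => h x : univ ⊆ insert a S)
    rw [card_insert_of_notMem haS, hS_card] at this
    simp at this
  rw [mem_insert, not_or] at hd
  obtain ⟨-, S', hS', hS'_card, hdS', haS'⟩ := red_compl d hd.1
  have hSD : S ⊆ {a}ᶜ := by simpa using haS
  have hSD' : S' ⊆ {a}ᶜ := by simpa using haS'
  obtain ⟨e, he⟩ := inter_nonempty_of_card_lt_card_add_card hSD hSD' (by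
    simp [card_compl, hS_card, hS'_card])
  rw [mem_inter] at he
  have hSS' : S = S' := eq_of_card_eq_of_not_hasRedCopy_two hc.not_hasRedCopy (red_singleton e)
    hS hS' hD (by simp [he]) (by simp [he]) hSD hSD' (by rw [hS_card, hS'_card])
  exact hd.2 (hSS' ▸ hdS')

theorem not_red_compl_singleton (hc : IsCounterexample c) (b : Fin 5) : ¬c {b}ᶜ = true :=
  hc.compl.not_red_singleton b

protected theorem false (hc : IsCounterexample c) : False := by
  obtain ⟨R, S, T, hR, -, hT, hRS, hST, -⟩ := hc.exists_red_chain (zero_ne_one (α := Fin 5))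
  have hR_pos := hc.card_pos_of_red hR
  have hRS_card := card_lt_card hRS
  have hST_card := card_lt_card hST
  have hT_lt := hc.card_lt_five_of_red hT
  have hR_ne : #R ≠ 1 := fun h => by
    obtain ⟨a, rfl⟩ := card_eq_one.1 h
    exact hc.not_red_singleton a hR
  have hT_ne : #T ≠ 4 := fun h => by
    obtain ⟨b, rfl⟩ := exists_eq_compl_singleton (S := T) (by rw [h, Fintype.card_fin])
    exact hc.not_red_compl_singleton b hT
  omega

end IsCounterexample

/-- every 2-coloring of Q_5 with both ∅ and [5] blue contains a red copy of
Q_2 or a blue copy of Q_3. -/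
theorem Q5_blue_bottom_blue_top (c : Finset (Fin 5) → Bool)
    (hbot : c ∅ = false) (htop : c Finset.univ = false) :
    HasRedCopy 2 5 c ∨ HasBlueCopy 3 5 c := by
  by_contra! h
  exact IsCounterexample.false ⟨hbot, htop, h.1, h.2⟩
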